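/- Let r, s be real numbers with 0 ≤ r < 1, 0 ≤ s < 1, and 0 < r + s ≤ 1. Then there is a constant C > 0 such that for every T with 0 < T ≤ 1 and all continuous maps φ, ψ from ℝ into the Schwartz space 𝓢(ℝ², ℂ), one has (∫₀^T ‖φ(t)ψ(t)‖²_{H^{r+s−1}} dt)^{1/2} ≤ C T^{1/2} (sup_{t∈[0,T]} ‖φ(t)‖_{H^r}) (sup_{t∈[0,T]} ‖ψ(t)‖_{H^s}), where φ(t)ψ(t) denotes the pointwise product on ℝ². -/

import Mathlib

open MeasureTheory
open scoped FourierTransform ENNReal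

/-- The Sobolev norm ‖f‖_{H^σ} = ‖⟨ξ⟩^σ f̂(ξ)‖_{L²_ξ(ℝ²)} of a function f : ℝ² → ℂ,
where ⟨ξ⟩ = (1+|ξ|²)^{1/2} and f̂ is the Fourier transform; valued in [0,∞]. -/
noncomputable def sobolevNorm (σ : ℝ) (f : EuclideanSpace ℝ (Fin 2) → ℂ) : ℝ≥0∞ :=
  (∫⁻ ξ, (ENNReal.ofReal ((1 + ‖ξ‖ ^ 2) ^ (σ / 2)) * ‖𝓕 f ξ‖₊) ^ 2) ^ (1/2 : ℝ)

abbrev E2 := EuclideanSpace ℝ (Fin 2)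

lemma cs_sq {α : Type*} [MeasurableSpace α] (μ : Measure α) {f g : α → ℝ≥0∞}
    (hf : Measurable f) (hg : Measurable g) :
    (∫⁻ a, f a * g a ∂μ) ^ 2 ≤ (∫⁻ a, f a ^ 2 ∂μ) * (∫⁻ a, g a ^ 2 ∂μ) := by
  have h := ENNReal.lintegral_mul_le_Lp_mul_Lq μ Real.HolderConjugate.two_two
    hf.aemeasurable hg.aemeasurable
  simp only [Pi.mul_apply, ENNReal.rpow_two] at h
  calc _ ≤ ((∫⁻ a, f a ^ 2 ∂μ) ^ (1 / 2 : ℝ) * (∫⁻ a, g a ^ 2 ∂μ) ^ (1 / 2 : ℝ)) ^ 2 := by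
        gcongr
    _ = _ := by
        rw [mul_pow, ← ENNReal.rpow_two, ← ENNReal.rpow_two, ← ENNReal.rpow_mul,
          ← ENNReal.rpow_mul]
        norm_num

lemma tri_sq (x y z : ℝ≥0∞) : (x + y + z) ^ 2 ≤ 9 * (x ^ 2 + y ^ 2 + z ^ 2) := by
  have h : x + y + z ≤ 3 * max (max x y) z := by
    calc x + y + z ≤ max (max x y) z + max (max x y) z + max (max x y) z := by
          gcongr <;> simp
      _ = _ := by ring
  calc _ ≤ (3 * max (max x y) z) ^ 2 := by gcongr
    _ = 9 * (max (max x y) z) ^ 2 := by rw [mul_pow]; norm_num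
    _ ≤ _ := by
      gcongr
      rcases max_choice (max x y) z with h | h <;> rw [h]
      · rcases max_choice x y with h | h <;> rw [h]
        · rw [add_assoc]; exact le_self_add
        · rw [add_comm (x ^ 2), add_assoc]; exact le_self_add
      · exact le_add_self

lemma kerA (k : E2 → E2 → ℝ≥0∞) (hk : Measurable (Function.uncurry k)) (C : ℝ≥0∞)
    (hC : ∀ ξ, ∫⁻ t, k ξ t ^ 2 ≤ C) (f g : E2 → ℝ≥0∞) (hf : Measurable f) (hg : Measurable g) :
    ∫⁻ ξ, (∫⁻ t, k ξ t * (f t * g (ξ - t))) ^ 2 ≤ C * ((∫⁻ t, f t ^ 2) * (∫⁻ t, g t ^ 2)) := by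
  have hk' : ∀ ξ, Measurable (k ξ) := fun ξ => hk.of_uncurry_left
  calc _ ≤ ∫⁻ ξ, C * ∫⁻ t, (f t * g (ξ - t)) ^ 2 := by
        refine lintegral_mono fun ξ => ?_
        refine (cs_sq volume (hk' ξ) (by fun_prop)).trans ?_
        gcongr
        exact hC ξ
    _ = C * ∫⁻ t, ∫⁻ ξ, (f t * g (ξ - t)) ^ 2 := by
        rw [lintegral_const_mul _ (Measurable.lintegral_prod_right' (f := fun p : E2 × E2 => (f p.2 * g (p.1 - p.2)) ^ 2) (by fun_prop)), lintegral_lintegral_swap]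
        exact Measurable.aemeasurable (by fun_prop)
    _ = C * ∫⁻ t, f t ^ 2 * ∫⁻ x, g x ^ 2 := by
        congr 1
        refine lintegral_congr fun t => ?_
        simp_rw [mul_pow]
        rw [lintegral_const_mul _ (by fun_prop), lintegral_sub_right_eq_self (fun x => g x ^ 2) t]
    _ = _ := by rw [lintegral_mul_const _ (by fun_prop)]

lemma kerB (k : E2 → E2 → ℝ≥0∞) (hk : Measurable (Function.uncurry k)) (C : ℝ≥0∞)
    (hC : ∀ t, ∫⁻ ξ, k ξ t ^ 2 ≤ C) (f g : E2 → ℝ≥0∞) (hf : Measurable f) (hg : Measurable g) :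
    ∫⁻ ξ, (∫⁻ t, k ξ t * (f t * g (ξ - t))) ^ 2 ≤ C * ((∫⁻ t, f t ^ 2) * (∫⁻ t, g t ^ 2)) := by
  have hk' : ∀ ξ, Measurable (k ξ) := fun ξ => hk.of_uncurry_left
  have hk'' : ∀ t, Measurable (fun ξ => k ξ t) := fun ξ => hk.of_uncurry_right
  have hkm : Measurable (fun p : E2 × E2 => k p.1 p.2) := hk
  calc _ ≤ ∫⁻ ξ, (∫⁻ t, (k ξ t * f t) ^ 2) * ∫⁻ t, g t ^ 2 := by
        refine lintegral_mono fun ξ => ?_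
        have := cs_sq volume (f := fun t => k ξ t * f t) (g := fun t => g (ξ - t)) ((hk' ξ).mul hf) (by fun_prop)
        rw [lintegral_sub_left_eq_self (fun x => g x ^ 2) ξ] at this
        simpa only [mul_assoc] using this
    _ = (∫⁻ t, ∫⁻ ξ, (k ξ t * f t) ^ 2) * ∫⁻ t, g t ^ 2 := by
        rw [lintegral_mul_const _ (Measurable.lintegral_prod_right' (f := fun p : E2 × E2 => (k p.1 p.2 * f p.2) ^ 2) (by fun_prop)), lintegral_lintegral_swap]
        exact Measurable.aemeasurable (by fun_prop)
    _ ≤ (∫⁻ t, C * f t ^ 2) * ∫⁻ t, g t ^ 2 := by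
        gcongr with t
        simp_rw [mul_pow]
        rw [lintegral_mul_const _ ((hk'' t).pow_const 2)]
        gcongr
        exact hC t
    _ = _ := by rw [lintegral_const_mul _ (by fun_prop), mul_assoc]

lemma rad (a : ℝ) (ha0 : 0 ≤ a) (ha1 : a < 1) : ∃ C : ℝ, 0 ≤ C ∧ ∀ R : ℝ, 0 ≤ R →
    ∫⁻ x in Metric.closedBall (0 : E2) R, ENNReal.ofReal ((1 + ‖x‖ ^ 2) ^ (-a)) ≤
      ENNReal.ofReal (C * (1 + R ^ 2) ^ (1 - a)) := by
  refine ⟨2 * (volume : Measure E2).real (Metric.ball 0 1) * (1 / (2 * (1 - a))), by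
    have : 0 < 1 - a := by linarith
    positivity, fun R hR => ?_⟩
  have hcont : Continuous fun x : E2 => (1 + ‖x‖ ^ 2) ^ (-a) := by
    refine Continuous.rpow_const (by fun_prop) fun x => Or.inl (by positivity)
  rw [← ofReal_integral_eq_lintegral_ofReal
    (hcont.continuousOn.integrableOn_compact (isCompact_closedBall _ _))
    (Filter.Eventually.of_forall fun x => by positivity)]
  apply ENNReal.ofReal_le_ofReal
  have h1 : ∫ x in Metric.closedBall (0 : E2) R, (1 + ‖x‖ ^ 2) ^ (-a) =
      ∫ x : E2, (Set.Iic R).indicator (fun y : ℝ => (1 + y ^ 2) ^ (-a)) ‖x‖ := by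
    rw [← integral_indicator measurableSet_closedBall]
    congr 1 with x
    by_cases h : ‖x‖ ≤ R
    · rw [Set.indicator_of_mem (mem_closedBall_zero_iff.2 h), Set.indicator_of_mem (Set.mem_Iic.2 h)]
    · rw [Set.indicator_of_notMem (mt mem_closedBall_zero_iff.1 h),
        Set.indicator_of_notMem (mt Set.mem_Iic.1 h)]
  rw [h1, integral_fun_norm_addHaar volume]
  have h2 : ∫ y in Set.Ioi (0 : ℝ), y ^ (Module.finrank ℝ E2 - 1) •
      (Set.Iic R).indicator (fun y : ℝ => (1 + y ^ 2) ^ (-a)) y =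
      ∫ y in (0 : ℝ)..R, y * (1 + y ^ 2) ^ (-a) := by
    rw [intervalIntegral.integral_of_le hR, ← integral_indicator measurableSet_Ioi,
      ← integral_indicator measurableSet_Ioc]
    congr 1 with x
    by_cases h1 : 0 < x <;> by_cases h2 : x ≤ R <;> simp [h1, h2]
  have h3 : ∫ y in (0 : ℝ)..R, y * (1 + y ^ 2) ^ (-a) =
      (1 + R ^ 2) ^ (1 - a) / (2 * (1 - a)) - (1 + 0 ^ 2) ^ (1 - a) / (2 * (1 - a)) := by
    refine intervalIntegral.integral_eq_sub_of_hasDerivAt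
      (f := fun y : ℝ => (1 + y ^ 2) ^ (1 - a) / (2 * (1 - a))) (fun x _ => ?_) ?_
    · have h := (((hasDerivAt_id x).pow 2).const_add 1).rpow_const (p := 1 - a)
        (Or.inl (by simp; positivity))
      have h := h.div_const (2 * (1 - a))
      refine h.congr_deriv ?_
      have : 1 - a ≠ 0 := by linarith
      simp
      field_simp
    · apply Continuous.intervalIntegrable
      refine continuous_id.mul (Continuous.rpow_const (by fun_prop) fun x => Or.inl (by positivity))
  rw [h2, h3]
  have h4 : 0 < 1 - a := by linarith
  simp only [finrank_euclideanSpace, Fintype.card_fin, smul_eq_mul, nsmul_eq_mul, Nat.cast_ofNat]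
  rw [mul_assoc, mul_assoc]
  gcongr
  rw [one_div, inv_mul_eq_div, sub_le_self_iff]
  positivity

noncomputable def qk (a : ℝ) (x y : E2) : ℝ≥0∞ :=
  if ‖x‖ ≤ ‖y‖ then
    ENNReal.ofReal (2 * ((1 + ‖x‖ ^ 2) ^ (-a / 2) * (1 + ‖y‖ ^ 2) ^ (-(1 - a) / 2))) else 0

lemma qk_meas (a : ℝ) : Measurable (fun p : E2 × E2 => qk a p.1 p.2) := by
  unfold qk
  refine Measurable.ite (measurableSet_le (by fun_prop) (by fun_prop)) (by fun_prop) (by fun_prop)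

lemma qk_int (a : ℝ) (ha0 : 0 ≤ a) (ha1 : a < 1) :
    ∃ C : ℝ, 0 ≤ C ∧ ∀ y, ∫⁻ x, qk a x y ^ 2 ≤ ENNReal.ofReal C := by
  obtain ⟨C, hC0, hC⟩ := rad a ha0 ha1
  refine ⟨4 * C, by positivity, fun y => ?_⟩
  have hy : 0 < 1 + ‖y‖ ^ 2 := by positivity
  have h1 : ∀ x, qk a x y ^ 2 = (Metric.closedBall (0 : E2) ‖y‖).indicator (fun x =>
      ENNReal.ofReal (4 * (1 + ‖y‖ ^ 2) ^ (-(1 - a))) * ENNReal.ofReal ((1 + ‖x‖ ^ 2) ^ (-a))) x := by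
    intro x
    have hx : 0 < 1 + ‖x‖ ^ 2 := by positivity
    by_cases h : ‖x‖ ≤ ‖y‖
    · rw [Set.indicator_of_mem (mem_closedBall_zero_iff.2 h), qk, if_pos h,
        ← ENNReal.ofReal_pow (by positivity), ← ENNReal.ofReal_mul (by positivity)]
      congr 1
      rw [mul_pow, mul_pow, ← Real.rpow_mul_natCast hx.le, ← Real.rpow_mul_natCast hy.le]
      push_cast
      rw [div_mul_cancel₀ _ two_ne_zero, div_mul_cancel₀ _ two_ne_zero]
      ring
    · rw [Set.indicator_of_notMem (mt mem_closedBall_zero_iff.1 h), qk, if_neg h]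
      simp
  simp_rw [h1]
  rw [lintegral_indicator measurableSet_closedBall, lintegral_const_mul _ (by fun_prop)]
  calc _ ≤ ENNReal.ofReal (4 * (1 + ‖y‖ ^ 2) ^ (-(1 - a))) *
        ENNReal.ofReal (C * (1 + ‖y‖ ^ 2) ^ (1 - a)) := by
        gcongr
        exact hC _ (norm_nonneg y)
    _ = _ := by
        rw [← ENNReal.ofReal_mul (by positivity)]
        congr 1
        rw [Real.rpow_neg hy.le]
        have : (1 + ‖y‖ ^ 2) ^ (1 - a) ≠ 0 := by positivity
        field_simp

lemma rp (u z s : ℝ) (hu : 0 < u) (hz : 0 < z) (h : u ≤ 4 * z) (hs0 : 0 ≤ s) (hs1 : s < 1) :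
    z ^ (-s / 2) ≤ 2 * u ^ (-s / 2) := by
  calc z ^ (-s / 2) ≤ (u / 4) ^ (-s / 2) :=
        Real.rpow_le_rpow_of_nonpos (by positivity) (by linarith) (by linarith)
    _ = 4 ^ (s / 2) * u ^ (-s / 2) := by
        rw [Real.div_rpow hu.le (by norm_num), neg_div, Real.rpow_neg (by norm_num : (0:ℝ) ≤ 4)]
        field_simp
    _ ≤ 4 ^ (1 / 2 : ℝ) * u ^ (-s / 2) := by
        gcongr
        norm_num
    _ = _ := by
        congr 1
        rw [← Real.sqrt_eq_rpow, show (4:ℝ) = 2 ^ 2 by norm_num]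
        simp

lemma sq4 {x y : ℝ} (hx : 0 ≤ x) (h : x ≤ 2 * y) : 1 + x ^ 2 ≤ 4 * (1 + y ^ 2) := by
  nlinarith

lemma ker_le (r s : ℝ) (hr0 : 0 ≤ r) (hr1 : r < 1) (hs0 : 0 ≤ s) (hs1 : s < 1) (ξ t : E2) :
    ENNReal.ofReal ((1 + ‖ξ‖ ^ 2) ^ ((r + s - 1) / 2) *
      ((1 + ‖t‖ ^ 2) ^ (-r / 2) * (1 + ‖ξ - t‖ ^ 2) ^ (-s / 2))) ≤
    qk r t ξ + qk s (ξ - t) ξ + qk (1 - r - s) ξ t := by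
  have hu : 0 < 1 + ‖ξ‖ ^ 2 := by positivity
  have hv : 0 < 1 + ‖t‖ ^ 2 := by positivity
  have hz : 0 < 1 + ‖ξ - t‖ ^ 2 := by positivity
  have t1 : ‖ξ‖ ≤ ‖ξ - t‖ + ‖t‖ := by simpa using norm_add_le (ξ - t) t
  have t2 : ‖t‖ ≤ ‖ξ - t‖ + ‖ξ‖ := by
    have := norm_sub_le ξ (ξ - t)
    simp at this; linarith
  by_cases c1 : ‖t‖ ≤ ‖ξ‖ ∧ ‖t‖ ≤ ‖ξ - t‖
  · refine le_trans ?_ (le_trans le_self_add le_self_add)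
    rw [qk, if_pos c1.1]
    apply ENNReal.ofReal_le_ofReal
    have h := rp _ _ s hu hz (sq4 (norm_nonneg _) (by linarith [c1.2])) hs0 hs1
    calc _ ≤ (1 + ‖ξ‖ ^ 2) ^ ((r + s - 1) / 2) *
          ((1 + ‖t‖ ^ 2) ^ (-r / 2) * (2 * (1 + ‖ξ‖ ^ 2) ^ (-s / 2))) := by gcongr
      _ = _ := by
        rw [show -(1 - r) / 2 = (r + s - 1) / 2 + -s / 2 by ring, Real.rpow_add hu]
        ring
  by_cases c2 : ‖ξ - t‖ ≤ ‖ξ‖ ∧ ‖ξ - t‖ ≤ ‖t‖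
  · refine le_trans ?_ (le_trans le_add_self le_self_add)
    rw [qk, if_pos c2.1]
    apply ENNReal.ofReal_le_ofReal
    have h := rp _ _ r hu hv (sq4 (norm_nonneg _) (by linarith [c2.2])) hr0 hr1
    calc _ ≤ (1 + ‖ξ‖ ^ 2) ^ ((r + s - 1) / 2) *
          ((2 * (1 + ‖ξ‖ ^ 2) ^ (-r / 2)) * (1 + ‖ξ - t‖ ^ 2) ^ (-s / 2)) := by gcongr
      _ = _ := by
        rw [show -(1 - s) / 2 = (r + s - 1) / 2 + -r / 2 by ring, Real.rpow_add hu]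
        ring
  have c3 : ‖ξ‖ ≤ ‖t‖ ∧ ‖ξ‖ ≤ ‖ξ - t‖ := by
    generalize ‖ξ - t‖ = p at *
    generalize ‖ξ‖ = q at *
    generalize ‖t‖ = m at *
    clear hu hv hz
    grind
  · refine le_trans ?_ le_add_self
    rw [qk, if_pos c3.1]
    apply ENNReal.ofReal_le_ofReal
    have h := rp _ _ s hv hz (sq4 (norm_nonneg _) (by linarith [c3.2])) hs0 hs1
    calc _ ≤ (1 + ‖ξ‖ ^ 2) ^ ((r + s - 1) / 2) *
          ((1 + ‖t‖ ^ 2) ^ (-r / 2) * (2 * (1 + ‖t‖ ^ 2) ^ (-s / 2))) := by gcongr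
      _ = _ := by
        rw [show -(1 - (1 - r - s)) / 2 = -r / 2 + -s / 2 by ring, Real.rpow_add hv,
          show -(1 - r - s) / 2 = (r + s - 1) / 2 by ring]
        ring

lemma tri_lint (P I1 I2 I3 : E2 → ℝ≥0∞) (h1 : Measurable I1) (h2 : Measurable I2)
    (hP : ∀ ξ, P ξ ≤ I1 ξ + I2 ξ + I3 ξ) (X1 X2 X3 D : ℝ≥0∞)
    (H1 : ∫⁻ ξ, I1 ξ ^ 2 ≤ X1 * D) (H2 : ∫⁻ ξ, I2 ξ ^ 2 ≤ X2 * D) (H3 : ∫⁻ ξ, I3 ξ ^ 2 ≤ X3 * D) :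
    ∫⁻ ξ, P ξ ^ 2 ≤ 9 * (X1 + X2 + X3) * D := by
  calc _ ≤ ∫⁻ ξ, 9 * (I1 ξ ^ 2 + I2 ξ ^ 2 + I3 ξ ^ 2) := by
        refine lintegral_mono fun ξ => ?_
        refine le_trans ?_ (tri_sq _ _ _)
        gcongr
        exact hP ξ
    _ = 9 * ((∫⁻ ξ, I1 ξ ^ 2) + (∫⁻ ξ, I2 ξ ^ 2) + ∫⁻ ξ, I3 ξ ^ 2) := by
        rw [lintegral_const_mul' _ _ (by norm_num),
          lintegral_add_left (f := fun ξ => I1 ξ ^ 2 + I2 ξ ^ 2) ((h1.pow_const 2).add (h2.pow_const 2)),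
          lintegral_add_left (h1.pow_const 2)]
    _ ≤ 9 * (X1 * D + X2 * D + X3 * D) := by gcongr
    _ = _ := by ring

lemma wt_inv (b : ℝ) (x : E2) (c : ℝ≥0∞) : ENNReal.ofReal ((1 + ‖x‖ ^ 2) ^ (-b / 2)) *
      (ENNReal.ofReal ((1 + ‖x‖ ^ 2) ^ (b / 2)) * c) = c := by
  rw [← mul_assoc, ← ENNReal.ofReal_mul (by positivity), ← Real.rpow_add (by positivity)]
  simp [neg_div]

lemma qk_meas1 (r : ℝ) : Measurable (fun p : E2 × E2 => qk r p.2 p.1) :=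
  Measurable.comp (g := fun p : E2 × E2 => qk r p.1 p.2)
    (f := fun p : E2 × E2 => (p.2, p.1)) (qk_meas r) (by fun_prop)

lemma qk_meas2 (s : ℝ) : Measurable (fun p : E2 × E2 => qk s (p.1 - p.2) p.1) :=
  Measurable.comp (g := fun p : E2 × E2 => qk s p.1 p.2)
    (f := fun p : E2 × E2 => (p.1 - p.2, p.1)) (qk_meas s) (by fun_prop)

lemma core_pt (r s : ℝ) (hr0 : 0 ≤ r) (hr1 : r < 1) (hs0 : 0 ≤ s) (hs1 : s < 1)
    (F G f g : E2 → ℝ≥0∞) (hF : Measurable F) (hG : Measurable G)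
    (fm : Measurable f) (gm : Measurable g)
    (hf : ∀ ξ, F ξ = ENNReal.ofReal ((1 + ‖ξ‖ ^ 2) ^ (-r / 2)) * f ξ)
    (hg : ∀ ξ, G ξ = ENNReal.ofReal ((1 + ‖ξ‖ ^ 2) ^ (-s / 2)) * g ξ) (ξ : E2) :
    ENNReal.ofReal ((1 + ‖ξ‖ ^ 2) ^ ((r + s - 1) / 2)) * ∫⁻ t, F t * G (ξ - t) ≤
      (∫⁻ t, qk r t ξ * (f t * g (ξ - t))) + (∫⁻ t, qk s (ξ - t) ξ * (f t * g (ξ - t))) +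
        ∫⁻ t, qk (1 - r - s) ξ t * (f t * g (ξ - t)) := by
  have m1' : Measurable (fun t => qk r t ξ) :=
    Measurable.comp (g := fun p : E2 × E2 => qk r p.1 p.2)
      (f := fun t : E2 => (t, ξ)) (qk_meas r) (by fun_prop)
  have m2' : Measurable (fun t => qk s (ξ - t) ξ) :=
    Measurable.comp (g := fun p : E2 × E2 => qk s p.1 p.2)
      (f := fun t : E2 => (ξ - t, ξ)) (qk_meas s) (by fun_prop)
  have mfg : Measurable (fun t => f t * g (ξ - t)) := by fun_prop
  have mFG : Measurable (fun t => F t * G (ξ - t)) := by fun_prop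
  rw [← lintegral_const_mul _ mFG,
    ← lintegral_add_left (f := fun t => qk r t ξ * (f t * g (ξ - t))) (m1'.mul mfg),
    ← lintegral_add_left (f := fun t => qk r t ξ * (f t * g (ξ - t)) +
      qk s (ξ - t) ξ * (f t * g (ξ - t))) ((m1'.mul mfg).add (m2'.mul mfg))]
  refine lintegral_mono fun t => ?_
  have h := ker_le r s hr0 hr1 hs0 hs1 ξ t
  rw [ENNReal.ofReal_mul (by positivity), ENNReal.ofReal_mul (by positivity)] at h
  calc _ = _ * (f t * g (ξ - t)) := by rw [hf t, hg (ξ - t)]; ring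
    _ ≤ _ := mul_le_mul_left h _
    _ = _ := by ring

lemma core (r s : ℝ) (hr0 : 0 ≤ r) (hr1 : r < 1) (hs0 : 0 ≤ s) (hs1 : s < 1)
    (hrs0 : 0 < r + s) (hrs1 : r + s ≤ 1) :
    ∃ C : ℝ, 0 < C ∧ ∀ F G : E2 → ℝ≥0∞, Measurable F → Measurable G →
      ∫⁻ ξ, (ENNReal.ofReal ((1 + ‖ξ‖ ^ 2) ^ ((r + s - 1) / 2)) * ∫⁻ t, F t * G (ξ - t)) ^ 2 ≤
      ENNReal.ofReal C * ((∫⁻ ξ, (ENNReal.ofReal ((1 + ‖ξ‖ ^ 2) ^ (r / 2)) * F ξ) ^ 2) *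
        (∫⁻ ξ, (ENNReal.ofReal ((1 + ‖ξ‖ ^ 2) ^ (s / 2)) * G ξ) ^ 2)) := by
  obtain ⟨C1, h1, H1⟩ := qk_int r hr0 hr1
  obtain ⟨C2, h2, H2⟩ := qk_int s hs0 hs1
  obtain ⟨C3, h3, H3⟩ := qk_int (1 - r - s) (by linarith) (by linarith)
  refine ⟨9 * (C1 + C2 + C3) + 1, by positivity, fun F G hF hG => ?_⟩
  obtain ⟨f, hf⟩ : ∃ f : E2 → ℝ≥0∞, f = fun ξ => ENNReal.ofReal ((1 + ‖ξ‖ ^ 2) ^ (r / 2)) * F ξ :=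
    ⟨_, rfl⟩
  obtain ⟨g, hg⟩ : ∃ g : E2 → ℝ≥0∞, g = fun ξ => ENNReal.ofReal ((1 + ‖ξ‖ ^ 2) ^ (s / 2)) * G ξ :=
    ⟨_, rfl⟩
  have fm : Measurable f := by rw [hf]; fun_prop
  have gm : Measurable g := by rw [hg]; fun_prop
  have hf' : ∀ ξ, F ξ = ENNReal.ofReal ((1 + ‖ξ‖ ^ 2) ^ (-r / 2)) * f ξ := fun ξ => by
    rw [hf, wt_inv]
  have hg' : ∀ ξ, G ξ = ENNReal.ofReal ((1 + ‖ξ‖ ^ 2) ^ (-s / 2)) * g ξ := fun ξ => by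
    rw [hg, wt_inv]
  have e1 : ∫⁻ ξ, (ENNReal.ofReal ((1 + ‖ξ‖ ^ 2) ^ (r / 2)) * F ξ) ^ 2 = ∫⁻ ξ, f ξ ^ 2 := by rw [hf]
  have e2 : ∫⁻ ξ, (ENNReal.ofReal ((1 + ‖ξ‖ ^ 2) ^ (s / 2)) * G ξ) ^ 2 = ∫⁻ ξ, g ξ ^ 2 := by rw [hg]
  rw [e1, e2]
  have A1 := kerA (fun ξ t => qk r t ξ) (qk_meas1 r) _ H1 f g fm gm
  have A2 := kerA (fun ξ t => qk s (ξ - t) ξ) (qk_meas2 s) (ENNReal.ofReal C2) (fun ξ => by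
    rw [lintegral_sub_left_eq_self (fun x => qk s x ξ ^ 2) ξ]; exact H2 ξ) f g fm gm
  have A3 := kerB (fun ξ t => qk (1 - r - s) ξ t) (qk_meas (1 - r - s)) _ H3 f g fm gm
  have mfg : Measurable (fun p : E2 × E2 => f p.2 * g (p.1 - p.2)) := by fun_prop
  have n1 : Measurable fun ξ => ∫⁻ t, qk r t ξ * (f t * g (ξ - t)) :=
    Measurable.lintegral_prod_right'
      (f := fun p : E2 × E2 => qk r p.2 p.1 * (f p.2 * g (p.1 - p.2))) ((qk_meas1 r).mul mfg)
  have n2 : Measurable fun ξ => ∫⁻ t, qk s (ξ - t) ξ * (f t * g (ξ - t)) :=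
    Measurable.lintegral_prod_right'
      (f := fun p : E2 × E2 => qk s (p.1 - p.2) p.1 * (f p.2 * g (p.1 - p.2)))
      ((qk_meas2 s).mul mfg)
  refine (tri_lint _ _ _ _ n1 n2 (core_pt r s hr0 hr1 hs0 hs1 F G f g hF hG fm gm hf' hg')
    _ _ _ _ A1 A2 A3).trans ?_
  refine mul_le_mul_left ?_ _
  rw [← ENNReal.ofReal_add h1 h2, ← ENNReal.ofReal_add (by positivity) h3]
  calc _ = ENNReal.ofReal (9 * (C1 + C2 + C3)) := by
        rw [ENNReal.ofReal_mul (by norm_num)]; norm_num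
    _ ≤ _ := ENNReal.ofReal_le_ofReal (by linarith)

open scoped Convolution in
lemma fourier_bd (φ ψ : SchwartzMap E2 ℂ) (ξ : E2) :
    ‖𝓕 (fun x => φ x * ψ x) ξ‖ₑ ≤ ∫⁻ t, ‖𝓕 (φ : E2 → ℂ) t‖ₑ * ‖𝓕 (ψ : E2 → ℂ) (ξ - t)‖ₑ := by
  set B := ContinuousLinearMap.mul ℂ ℂ
  set H := SchwartzMap.convolution B (𝓕 φ) (𝓕 ψ) with hH
  have key : ∀ (f : SchwartzMap E2 ℂ) (x : E2), (𝓕 (𝓕 f) : SchwartzMap E2 ℂ) (-x) = f x := by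
    intro f x
    have : (𝓕⁻ (𝓕 f) : SchwartzMap E2 ℂ) x = f x := by simp
    rw [← this, SchwartzMap.fourierInv_coe, SchwartzMap.fourier_coe (𝓕 f), Real.fourierInv_eq_fourier_neg]
  have h1 : (fun x => φ x * ψ x) = ⇑(𝓕⁻ H : SchwartzMap E2 ℂ) := by
    ext x
    rw [SchwartzMap.fourierInv_coe, Real.fourierInv_eq_fourier_neg, ← SchwartzMap.fourier_coe, hH,
      SchwartzMap.fourier_convolution]
    simp [B, key]
  have h2 : 𝓕 (fun x => φ x * ψ x) ξ = H ξ := by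
    rw [h1, ← SchwartzMap.fourier_coe]; simp
  rw [h2, hH, SchwartzMap.convolution_apply, convolution_def]
  refine (enorm_integral_le_lintegral_enorm _).trans (le_of_eq ?_)
  refine lintegral_congr fun t => ?_
  simp [B, enorm_mul, SchwartzMap.fourier_coe]

lemma sqrt_sq' (x : ℝ≥0∞) : (x ^ (1/2 : ℝ)) ^ 2 = x := by
  rw [← ENNReal.rpow_two, ← ENNReal.rpow_mul]; norm_num

lemma sq_sqrt' (x : ℝ≥0∞) : (x ^ 2) ^ (1/2 : ℝ) = x := by
  rw [← ENNReal.rpow_two, ← ENNReal.rpow_mul]; norm_num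

lemma sobolevNorm_sq (σ : ℝ) (f : E2 → ℂ) : sobolevNorm σ f ^ 2 =
    ∫⁻ ξ, (ENNReal.ofReal ((1 + ‖ξ‖ ^ 2) ^ (σ / 2)) * ‖𝓕 f ξ‖ₑ) ^ 2 := by
  rw [sobolevNorm, sqrt_sq']; rfl

/-- Time-localized bilinear Sobolev estimate: for 0 ≤ r,s < 1 with 0 < r + s ≤ 1 there
is C > 0 such that for all 0 < T ≤ 1 and all continuous curves φ, ψ : ℝ → 𝓢(ℝ²,ℂ),
(∫₀^T ‖φ(t)ψ(t)‖²_{H^{r+s−1}} dt)^{1/2}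
  ≤ C T^{1/2} (sup_{t∈[0,T]} ‖φ(t)‖_{H^r}) (sup_{t∈[0,T]} ‖ψ(t)‖_{H^s}). -/
theorem bilinear_sobolev_time_estimate (r s : ℝ)
    (hr0 : 0 ≤ r) (hr1 : r < 1) (hs0 : 0 ≤ s) (hs1 : s < 1)
    (hrs0 : 0 < r + s) (hrs1 : r + s ≤ 1) :
    ∃ C > (0 : ℝ), ∀ T : ℝ, 0 < T → T ≤ 1 →
      ∀ φ ψ : ℝ → SchwartzMap (EuclideanSpace ℝ (Fin 2)) ℂ,
        Continuous φ → Continuous ψ →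
        (∫⁻ t in Set.Ioc (0 : ℝ) T,
            (sobolevNorm (r + s - 1) (fun x => φ t x * ψ t x)) ^ 2) ^ (1/2 : ℝ) ≤
          ENNReal.ofReal (C * T ^ (1/2 : ℝ)) *
            (⨆ t ∈ Set.Icc (0 : ℝ) T, sobolevNorm r (φ t)) *
            (⨆ t ∈ Set.Icc (0 : ℝ) T, sobolevNorm s (ψ t)) := by
  obtain ⟨C, hC, H⟩ := core r s hr0 hr1 hs0 hs1 hrs0 hrs1
  refine ⟨C ^ (1/2 : ℝ), by positivity, fun T hT _ φ ψ _ _ => ?_⟩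
  set A := ⨆ t ∈ Set.Icc (0 : ℝ) T, sobolevNorm r (φ t) with hA
  set B := ⨆ t ∈ Set.Icc (0 : ℝ) T, sobolevNorm s (ψ t) with hB
  have hfm : ∀ f : SchwartzMap E2 ℂ, Measurable fun ξ => ‖𝓕 (f : E2 → ℂ) ξ‖ₑ := by
    intro f
    rw [← SchwartzMap.fourier_coe]
    exact (𝓕 f).continuous.enorm.measurable
  have main : ∀ t ∈ Set.Ioc (0 : ℝ) T,
      (sobolevNorm (r + s - 1) (fun x => φ t x * ψ t x)) ^ 2 ≤ ENNReal.ofReal C * (A ^ 2 * B ^ 2) := by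
    intro t ht
    have ht' : t ∈ Set.Icc (0 : ℝ) T := ⟨ht.1.le, ht.2⟩
    have a1 : sobolevNorm r (φ t) ≤ A := le_iSup₂ (f := fun t _ => sobolevNorm r (φ t)) t ht'
    have b1 : sobolevNorm s (ψ t) ≤ B := le_iSup₂ (f := fun t _ => sobolevNorm s (ψ t)) t ht'
    calc _ ≤ ∫⁻ ξ, (ENNReal.ofReal ((1 + ‖ξ‖ ^ 2) ^ ((r + s - 1) / 2)) *
            ∫⁻ u, ‖𝓕 (φ t : E2 → ℂ) u‖ₑ * ‖𝓕 (ψ t : E2 → ℂ) (ξ - u)‖ₑ) ^ 2 := by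
          rw [sobolevNorm_sq]
          gcongr with ξ
          exact fourier_bd _ _ _
      _ ≤ _ := H _ _ (hfm (φ t)) (hfm (ψ t))
      _ = ENNReal.ofReal C * (sobolevNorm r (φ t) ^ 2 * sobolevNorm s (ψ t) ^ 2) := by
          rw [sobolevNorm_sq, sobolevNorm_sq]
      _ ≤ _ := by gcongr
  calc _ ≤ (∫⁻ t in Set.Ioc (0 : ℝ) T, ENNReal.ofReal C * (A ^ 2 * B ^ 2)) ^ (1/2 : ℝ) := by
        refine ENNReal.rpow_le_rpow ?_ (by norm_num)
        exact setLIntegral_mono' measurableSet_Ioc main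
    _ = _ := by
        have half : (0:ℝ) ≤ 1/2 := by norm_num
        rw [setLIntegral_const, Real.volume_Ioc, sub_zero, ENNReal.mul_rpow_of_nonneg _ _ half,
          ENNReal.mul_rpow_of_nonneg _ _ half, ENNReal.mul_rpow_of_nonneg _ _ half, sq_sqrt', sq_sqrt',
          ENNReal.ofReal_mul (by positivity), ENNReal.ofReal_rpow_of_pos hC,
          ENNReal.ofReal_rpow_of_pos hT]
        ring
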